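/- arXiv:1802.05897 — 8 statements merged into one kernel-verified Lean document; each statement's English description precedes it below -/
import Mathlib

section
/- For every natural number n, the generalized bi-periodic Fibonacci sequence satisfies the Binet formula w_n = (a^{ζ(n+1)} / (ab)^{⌊n/2⌋}) · (A·α^{n-1} − B·β^{n-1}). -/
/-- The generalized bi-periodic Fibonacci sequence with parameters `a, b`
and initial values `w0, w1`. -/
noncomputable def w (a b w0 w1 : ℝ) : ℕ → ℝ
  | 0 => w0
  | 1 => w1
  | n + 2 => (if Even (n + 2) then a else b) * w a b w0 w1 (n + 1) + w a b w0 w1 n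

theorem w_pair (a b w0 w1 : ℝ) (ha : a ≠ 0) (hb : b ≠ 0) (α β A B : ℝ)
    (hα0 : α ≠ 0) (hβ0 : β ≠ 0)
    (h1 : α ^ 2 = a * b * α + a * b) (h2 : β ^ 2 = a * b * β + a * b)
    (e0 : w0 = a * (A * α⁻¹ - B * β⁻¹)) (e1 : w1 = A - B) (k : ℕ) :
    w a b w0 w1 (2 * k) =
      a / (a * b) ^ k * (A * (α ^ (2 * k) * α⁻¹) - B * (β ^ (2 * k) * β⁻¹)) ∧
    w a b w0 w1 (2 * k + 1) =
      1 / (a * b) ^ k * (A * α ^ (2 * k) - B * β ^ (2 * k)) := by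
  induction k with
  | zero => simp [w, ← e0, ← e1]
  | succ k ih =>
    obtain ⟨i0, i1⟩ := ih
    have hab : a * b ≠ 0 := mul_ne_zero ha hb
    have s0 : w a b w0 w1 (2 * (k + 1)) =
        a / (a * b) ^ (k + 1) *
          (A * (α ^ (2 * (k + 1)) * α⁻¹) - B * (β ^ (2 * (k + 1)) * β⁻¹)) := by
      have : Even (2 * k + 2) := ⟨k + 1, by ring⟩
      rw [show 2 * (k + 1) = 2 * k + 2 by ring, w, if_pos this, i0, i1,
        pow_add α, pow_add β, h1, h2, pow_succ (a * b)]
      field_simp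
      ring
    refine ⟨s0, ?_⟩
    have : ¬ Even (2 * k + 1 + 2) := by
      rw [Nat.not_even_iff_odd]; exact ⟨k + 1, by ring⟩
    rw [show 2 * (k + 1) + 1 = 2 * k + 1 + 2 by ring, w, if_neg this,
      show 2 * k + 1 + 1 = 2 * (k + 1) by ring, s0, i1]
    have p : α ^ (2 * (k + 1)) = α ^ (2 * k) * α ^ 2 := by ring
    have q : β ^ (2 * (k + 1)) = β ^ (2 * k) * β ^ 2 := by ring
    have p' : α ^ (2 * (k + 1)) * α⁻¹ = α ^ (2 * k) * α := by rw [p]; field_simp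
    have q' : β ^ (2 * (k + 1)) * β⁻¹ = β ^ (2 * k) * β := by rw [q]; field_simp
    rw [p', q', p, q, h1, h2, pow_succ (a * b)]
    field_simp
    ring

/-- Binet formula for the generalized bi-periodic Fibonacci sequence.
Here `(n + 1) % 2` is the parity function `ζ(n+1)`, and the powers
`α ^ (n - 1)`, `β ^ (n - 1)` are integer powers. -/
theorem stmt2 (a b w0 w1 : ℝ) (ha : a ≠ 0) (hb : b ≠ 0)
    (hD : a ^ 2 * b ^ 2 + 4 * (a * b) > 0)
    (α β A B : ℝ)
    (hα : α = (a * b + Real.sqrt (a ^ 2 * b ^ 2 + 4 * (a * b))) / 2)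
    (hβ : β = (a * b - Real.sqrt (a ^ 2 * b ^ 2 + 4 * (a * b))) / 2)
    (hA : A = (α * w1 + b * w0) / (α - β))
    (hB : B = (β * w1 + b * w0) / (α - β))
    (n : ℕ) :
    w a b w0 w1 n =
      a ^ ((n + 1) % 2) / (a * b) ^ (n / 2) *
        (A * α ^ ((n : ℤ) - 1) - B * β ^ ((n : ℤ) - 1)) := by
  have hs := Real.sq_sqrt hD.le
  have hsp := Real.sqrt_pos.mpr hD
  set s := Real.sqrt (a ^ 2 * b ^ 2 + 4 * (a * b)) with hsdef
  have hab : a * b ≠ 0 := mul_ne_zero ha hb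
  have hd : α - β ≠ 0 := by
    have : α - β = s := by rw [hα, hβ]; ring
    rw [this]; exact hsp.ne'
  have hm : α * β = -(a * b) := by rw [hα, hβ]; linear_combination (-1 / 4) * hs
  have h1 : α ^ 2 = a * b * α + a * b := by rw [hα]; linear_combination (1 / 4) * hs
  have h2 : β ^ 2 = a * b * β + a * b := by rw [hβ]; linear_combination (1 / 4) * hs
  have hα0 : α ≠ 0 := by
    intro h; rw [h, zero_mul] at hm; exact hab (by linarith)
  have hβ0 : β ≠ 0 := by
    intro h; rw [h, mul_zero] at hm; exact hab (by linarith)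
  have e1 : w1 = A - B := by
    rw [hA, hB, ← sub_div, eq_div_iff hd]; ring
  have e0 : w0 = a * (A * α⁻¹ - B * β⁻¹) := by
    have hAd : A * (α - β) = α * w1 + b * w0 := by rw [hA, div_mul_cancel₀ _ hd]
    have hBd : B * (α - β) = β * w1 + b * w0 := by rw [hB, div_mul_cancel₀ _ hd]
    have : w0 * (α * β) = a * (A * β - B * α) := by
      apply mul_right_cancel₀ hd
      linear_combination w0 * (α - β) * hm - a * β * hAd + a * α * hBd
    field_simp
    linear_combination this
  have key := w_pair a b w0 w1 ha hb α β A B hα0 hβ0 h1 h2 e0 e1 (n / 2)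
  rcases Nat.even_or_odd' n with ⟨k, rfl | rfl⟩
  · have r1 : 2 * k / 2 = k := by omega
    have r2 : (2 * k + 1) % 2 = 1 := by omega
    rw [r1] at key
    rw [r1, r2, key.1, zpow_sub_one₀ hα0, zpow_sub_one₀ hβ0, zpow_natCast, zpow_natCast, pow_one]
  · have r1 : (2 * k + 1) / 2 = k := by omega
    have r2 : (2 * k + 1 + 1) % 2 = 0 := by omega
    rw [r1] at key
    have r3 : ((2 * k + 1 : ℕ) : ℤ) - 1 = ((2 * k : ℕ) : ℤ) := by push_cast; ring
    rw [r1, r2, key.2, r3, zpow_natCast, zpow_natCast, pow_zero]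
end

section
/- For every natural number n, the generalized bi-periodic Fibonacci quaternion satisfies the Binet formula W_n = (1/(ab)^{⌊n/2⌋})·(A·α*·α^{n-1} − B·β*·β^{n-1}) if n is even, and W_n = (1/(ab)^{⌊n/2⌋})·(A·α**·α^{n-1} − B·β**·β^{n-1}) if n is odd. -/
/-- The standard basis `e_0 = 1, e_1 = i, e_2 = j, e_3 = k` of the real quaternions. -/
noncomputable def e : ℕ → Quaternion ℝ
  | 0 => 1
  | 1 => ⟨0, 1, 0, 0⟩
  | 2 => ⟨0, 0, 1, 0⟩
  | _ => ⟨0, 0, 0, 1⟩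

/-- The generalized bi-periodic Fibonacci quaternion `W_n = ∑_{l=0}^{3} w_{n+l} e_l`. -/
noncomputable def W (a b w0 w1 : ℝ) (n : ℕ) : Quaternion ℝ :=
  ∑ l ∈ Finset.range 4, w a b w0 w1 (n + l) • e l

/-- `qstar a b x = ∑_{l=0}^{3} (a^{ζ(l+1)}/(ab)^{⌊l/2⌋}) x^l e_l`; applied to `α`, `β`
it gives the quaternions `α*`, `β*`. -/
noncomputable def qstar (a b x : ℝ) : Quaternion ℝ :=
  ∑ l ∈ Finset.range 4, (a ^ ((l + 1) % 2) / (a * b) ^ (l / 2) * x ^ l) • e l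

/-- `qstarstar a b x = ∑_{l=0}^{3} (a^{ζ(l)}/(ab)^{⌊(l+1)/2⌋}) x^l e_l`; applied to `α`, `β`
it gives the quaternions `α**`, `β**`. -/
noncomputable def qstarstar (a b x : ℝ) : Quaternion ℝ :=
  ∑ l ∈ Finset.range 4, (a ^ (l % 2) / (a * b) ^ ((l + 1) / 2) * x ^ l) • e l

theorem w_even (a b w0 w1 : ℝ) (m : ℕ) : w a b w0 w1 (2 * m + 2) =
    a * w a b w0 w1 (2 * m + 1) + w a b w0 w1 (2 * m) := by
  rw [w, if_pos]
  exact ⟨m + 1, by ring⟩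

theorem w_odd (a b w0 w1 : ℝ) (m : ℕ) : w a b w0 w1 (2 * m + 3) =
    b * w a b w0 w1 (2 * m + 2) + w a b w0 w1 (2 * m + 1) := by
  rw [show 2 * m + 3 = (2 * m + 1) + 2 by ring, w, if_neg]
  rw [Nat.not_even_iff_odd]
  exact ⟨m + 1, by ring⟩

theorem binet_aux (a b w0 w1 α β A B : ℝ) (ha : a ≠ 0) (hb : b ≠ 0)
    (hα0 : α ≠ 0) (hβ0 : β ≠ 0)
    (h1 : α ^ 2 = a * b * α + a * b) (h2 : β ^ 2 = a * b * β + a * b)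
    (h0 : a * (A / α - B / β) = w0) (hw1 : A - B = w1) (m : ℕ) :
    w a b w0 w1 (2 * m) = a / (a * b) ^ m * (A / α * α ^ (2 * m) - B / β * β ^ (2 * m)) ∧
    w a b w0 w1 (2 * m + 1) = 1 / (a * b) ^ m * (A * α ^ (2 * m) - B * β ^ (2 * m)) := by
  induction m with
  | zero => simp [w, h0, hw1]
  | succ m ih =>
    obtain ⟨i1, i2⟩ := ih
    have e1 : w a b w0 w1 (2 * m + 2) = a / (a * b) ^ (m + 1) *
        (A / α * α ^ (2 * (m + 1)) - B / β * β ^ (2 * (m + 1))) := by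
      rw [w_even, i1, i2, show 2 * (m + 1) = 2 * m + 2 by ring, pow_add α, pow_add β, h1, h2]
      field_simp
      ring
    refine ⟨e1, ?_⟩
    rw [show 2 * (m + 1) + 1 = 2 * m + 3 by ring, w_odd, e1, i2,
      show 2 * (m + 1) = 2 * m + 2 by ring, pow_add α, pow_add β]
    have k1 : A / α * (α ^ (2 * m) * α ^ 2) = A * α ^ (2 * m) * α := by field_simp
    have k2 : B / β * (β ^ (2 * m) * β ^ 2) = B * β ^ (2 * m) * β := by field_simp
    rw [k1, k2, h1, h2]
    field_simp
    ring

/-- Binet formula for the generalized bi-periodic Fibonacci quaternions. -/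
theorem stmt4 (a b w0 w1 α β A B : ℝ)
    (ha : a ≠ 0) (hb : b ≠ 0) (hD : a ^ 2 * b ^ 2 + 4 * (a * b) > 0)
    (hα : α = (a * b + Real.sqrt (a ^ 2 * b ^ 2 + 4 * (a * b))) / 2)
    (hβ : β = (a * b - Real.sqrt (a ^ 2 * b ^ 2 + 4 * (a * b))) / 2)
    (hA : A = (α * w1 + b * w0) / (α - β))
    (hB : B = (β * w1 + b * w0) / (α - β))
    (n : ℕ) :
    W a b w0 w1 n =
      if Even n then
        ((a * b) ^ (n / 2))⁻¹ •
          ((A * α ^ ((n : ℤ) - 1)) • qstar a b α - (B * β ^ ((n : ℤ) - 1)) • qstar a b β)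
      else
        ((a * b) ^ (n / 2))⁻¹ •
          ((A * α ^ ((n : ℤ) - 1)) • qstarstar a b α -
            (B * β ^ ((n : ℤ) - 1)) • qstarstar a b β) := by
  have hs := Real.sq_sqrt hD.le
  have hspos := Real.sqrt_pos.mpr hD
  have h1 : α ^ 2 = a * b * α + a * b := by rw [hα]; linear_combination hs / 4
  have h2 : β ^ 2 = a * b * β + a * b := by rw [hβ]; linear_combination hs / 4
  have hab : a * b ≠ 0 := mul_ne_zero ha hb
  have hprod : α * β = -(a * b) := by rw [hα, hβ]; linear_combination -hs / 4
  have hα0 : α ≠ 0 := by rintro h; rw [h] at h1; apply hab; linarith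
  have hβ0 : β ≠ 0 := by rintro h; rw [h] at h2; apply hab; linarith
  have hd : α - β ≠ 0 := by intro h; rw [hα, hβ] at h; linarith
  have hw1 : A - B = w1 := by rw [hA, hB]; field_simp; ring
  have h0 : a * (A / α - B / β) = w0 := by
    have : A / α - B / β = (A * β - B * α) / (α * β) := by field_simp
    rw [this, hprod, hA, hB]
    field_simp
    ring
  have key := binet_aux a b w0 w1 α β A B ha hb hα0 hβ0 h1 h2 h0 hw1
  clear hA hB hα hβ hs hspos hD h0 hw1 h1 h2 hprod hd
  rcases Nat.even_or_odd' n with ⟨m, rfl | rfl⟩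
  · rw [if_pos (even_two_mul m)]
    have z : ∀ x : ℝ, x ≠ 0 → x ^ (((2 * m : ℕ) : ℤ) - 1) = x ^ (2 * m) / x := fun x hx => by
      rw [zpow_sub_one₀ hx, zpow_natCast]; rfl
    have q : 2 * m / 2 = m := by omega
    rw [z α hα0, z β hβ0, q]
    obtain ⟨c0, c1⟩ := key m
    obtain ⟨c2, c3⟩ := key (m + 1)
    rw [show 2 * (m + 1) = 2 * m + 2 by ring] at c2 c3
    rw [show 2 * m + 2 + 1 = 2 * m + 3 by ring] at c3
    unfold W qstar
    rw [Finset.smul_sum, Finset.smul_sum, ← Finset.sum_sub_distrib, Finset.smul_sum]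
    refine Finset.sum_congr rfl fun l hl => ?_
    rw [smul_smul, smul_smul, ← sub_smul, smul_smul]
    congr 1
    rw [Finset.mem_range] at hl
    interval_cases l <;> simp [c0, c1, c2, c3] <;> field_simp <;> first | (left; trivial) | ring | skip
  · rw [if_neg (by simp)]
    have z : ∀ x : ℝ, x ^ (((2 * m + 1 : ℕ) : ℤ) - 1) = x ^ (2 * m) := fun x => by
      rw [← zpow_natCast]; rw [show (((2 * m + 1 : ℕ) : ℤ) - 1) = ((2 * m : ℕ) : ℤ) by push_cast; ring]
    have q : (2 * m + 1) / 2 = m := by omega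
    rw [z α, z β, q]
    obtain ⟨-, c1⟩ := key m
    obtain ⟨c2, c3⟩ := key (m + 1)
    obtain ⟨c4, -⟩ := key (m + 2)
    rw [show 2 * (m + 1) = 2 * m + 2 by ring] at c2 c3
    rw [show 2 * m + 2 + 1 = 2 * m + 1 + 2 by ring] at c3
    rw [show 2 * (m + 2) = 2 * m + 1 + 3 by ring] at c4
    rw [show 2 * m + 2 = 2 * m + 1 + 1 by ring] at c2
    unfold W qstarstar
    rw [Finset.smul_sum, Finset.smul_sum, ← Finset.sum_sub_distrib, Finset.smul_sum]
    refine Finset.sum_congr rfl fun l hl => ?_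
    rw [smul_smul, smul_smul, ← sub_smul, smul_smul]
    congr 1
    rw [Finset.mem_range] at hl
    interval_cases l <;> simp [c1, c2, c3, c4] <;> field_simp <;> first | (left; trivial) | ring | skip
end

section
/- (Catalan's like identity) Let n be a nonnegative integer and r an even nonnegative integer with r ≤ n. If n is even, then W_{n-r}·W_{n+r} − W_n² = (A·B·(α^r − β^r)/(αβ)^{r+1})·(α*·β*·β^r − β*·α*·α^r); if n is odd, then W_{n-r}·W_{n+r} − W_n² = (A·B·(α^r − β^r)/(αβ)^{r})·(α**·β**·β^r − β**·α**·α^r). -/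
theorem w_binet (a b w0 w1 α β A B : ℝ) (ha : a ≠ 0) (hb : b ≠ 0) (h1 : α + β = a * b)
    (h2 : α * β = -(a * b)) (h3 : α - β ≠ 0)
    (hA : A = (α * w1 + b * w0) / (α - β))
    (hB : B = (β * w1 + b * w0) / (α - β)) (m : ℕ) :
    w a b w0 w1 (2 * m) = a * (A / α * (α + 1) ^ m - B / β * (β + 1) ^ m) ∧
    w a b w0 w1 (2 * m + 1) = A * (α + 1) ^ m - B * (β + 1) ^ m := by
  have hα : α ≠ 0 := by
    rintro rfl
    have : a * b ≠ 0 := mul_ne_zero ha hb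
    apply this; linarith
  have hβ : β ≠ 0 := by
    rintro rfl
    have : a * b ≠ 0 := mul_ne_zero ha hb
    apply this; linarith
  have eα : α ^ 2 = a * b * (α + 1) := by
    linear_combination α * h1 - h2
  have eβ : β ^ 2 = a * b * (β + 1) := by
    linear_combination β * h1 - h2
  have kα : a * b * (A / α * (α + 1)) = A * α := by
    field_simp
    linear_combination (-A) * eα
  have kβ : a * b * (B / β * (β + 1)) = B * β := by
    field_simp
    linear_combination (-B) * eβ
  have kα' : a * (A / α * (α + 1)) = a * (A / α) + a * A := by
    field_simp
    ring
  have kβ' : a * (B / β * (β + 1)) = a * (B / β) + a * B := by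
    field_simp
    ring
  induction m with
  | zero =>
    constructor
    · simp only [w, mul_zero, pow_zero, mul_one]
      rw [hA, hB]
      field_simp
      linear_combination (-w0) * (α - β) * h2 * (-1)
    · simp only [w, mul_zero, zero_add, pow_zero, mul_one]
      rw [hA, hB]
      field_simp
      ring
  | succ m ih =>
    obtain ⟨i1, i2⟩ := ih
    have e1 : w a b w0 w1 (2 * (m + 1)) = a * w a b w0 w1 (2 * m + 1) + w a b w0 w1 (2 * m) := by
      rw [show 2 * (m + 1) = 2 * m + 2 by ring, w, if_pos (by simp [parity_simps])]
    have e2 : w a b w0 w1 (2 * (m + 1) + 1)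
        = b * w a b w0 w1 (2 * (m + 1)) + w a b w0 w1 (2 * m + 1) := by
      rw [show 2 * (m + 1) + 1 = (2 * m + 1) + 2 by ring, w, if_neg (by simp [parity_simps])]
      rfl
    have i3 : w a b w0 w1 (2 * (m + 1))
        = a * (A / α * (α + 1) ^ (m + 1) - B / β * (β + 1) ^ (m + 1)) := by
      rw [e1, i1, i2, pow_succ, pow_succ]
      linear_combination (-(α + 1) ^ m) * kα' + (β + 1) ^ m * kβ'
    refine ⟨i3, ?_⟩
    rw [e2, i3, i2, pow_succ, pow_succ]
    linear_combination (α + 1) ^ m * kα - (β + 1) ^ m * kβ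

theorem cat_aux (X Y : Quaternion ℝ) (T U P Q : ℝ) (h1 : T * U = 1) (h2 : P * Q = 1) :
    (T • X - U • Y) * ((T * P ^ 2) • X - (U * Q ^ 2) • Y) - ((T * P) • X - (U * Q) • Y) ^ 2
      = (P - Q) • (Q • (X * Y) - P • (Y * X)) := by
  have c1 : -(T * U * Q ^ 2) + T * U * (P * Q) = (P - Q) * Q := by
    rw [h1]; ring
  have c2 : -(T * U * P ^ 2) + T * U * (P * Q) = -((P - Q) * P) := by
    rw [h1]; ring
  have : (T • X - U • Y) * ((T * P ^ 2) • X - (U * Q ^ 2) • Y) - ((T * P) • X - (U * Q) • Y) ^ 2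
      = (-(T * U * Q ^ 2) + T * U * (P * Q)) • (X * Y)
        + (-(T * U * P ^ 2) + T * U * (P * Q)) • (Y * X) := by
    simp only [pow_two ((T * P) • X - (U * Q) • Y), sub_mul, mul_sub, smul_mul_smul_comm]
    module
  rw [this, c1, c2]
  module

/-- Catalan's like identity for the generalized bi-periodic Fibonacci quaternions. -/
theorem stmt5 (a b w0 w1 α β A B : ℝ)
    (ha : a ≠ 0) (hb : b ≠ 0) (hD : a ^ 2 * b ^ 2 + 4 * (a * b) > 0)
    (hα : α = (a * b + Real.sqrt (a ^ 2 * b ^ 2 + 4 * (a * b))) / 2)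
    (hβ : β = (a * b - Real.sqrt (a ^ 2 * b ^ 2 + 4 * (a * b))) / 2)
    (hA : A = (α * w1 + b * w0) / (α - β))
    (hB : B = (β * w1 + b * w0) / (α - β))
    (n r : ℕ) (hr : Even r) (hrn : r ≤ n) :
    W a b w0 w1 (n - r) * W a b w0 w1 (n + r) - W a b w0 w1 n ^ 2 =
      if Even n then
        (A * B * (α ^ r - β ^ r) / (α * β) ^ (r + 1)) •
          (β ^ r • (qstar a b α * qstar a b β) - α ^ r • (qstar a b β * qstar a b α))
      else
        (A * B * (α ^ r - β ^ r) / (α * β) ^ r) •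
          (β ^ r • (qstarstar a b α * qstarstar a b β) -
            α ^ r • (qstarstar a b β * qstarstar a b α)) := by
  have hs : Real.sqrt (a ^ 2 * b ^ 2 + 4 * (a * b)) ^ 2 = a ^ 2 * b ^ 2 + 4 * (a * b) :=
    Real.sq_sqrt hD.le
  have hs0 : 0 < Real.sqrt (a ^ 2 * b ^ 2 + 4 * (a * b)) := Real.sqrt_pos.mpr hD
  have h1 : α + β = a * b := by rw [hα, hβ]; ring
  have h2 : α * β = -(a * b) := by
    rw [hα, hβ]
    linear_combination (-1 / 4) * hs
  have h3 : α - β ≠ 0 := by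
    have : α - β = Real.sqrt (a ^ 2 * b ^ 2 + 4 * (a * b)) := by rw [hα, hβ]; ring
    rw [this]; exact hs0.ne'
  clear hα hβ hs hs0 hD
  have bin := w_binet a b w0 w1 α β A B ha hb h1 h2 h3 hA hB
  clear hA hB
  have hab : a * b ≠ 0 := mul_ne_zero ha hb
  have hα : α ≠ 0 := by
    rintro rfl
    apply hab; linarith
  have hβ : β ≠ 0 := by
    rintro rfl
    apply hab; linarith
  have eα : α ^ 2 = a * b * (α + 1) := by
    linear_combination α * h1 - h2
  have eβ : β ^ 2 = a * b * (β + 1) := by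
    linear_combination β * h1 - h2
  have pq : (α + 1) * (β + 1) = 1 := by linear_combination h1 + h2
  have fα : α + 1 = α ^ 2 / (a * b) := by rw [eα]; field_simp
  have fβ : β + 1 = β ^ 2 / (a * b) := by rw [eβ]; field_simp
  have hW0 : ∀ m, W a b w0 w1 (2 * m) = (α + 1) ^ m • ((A / α) • qstar a b α)
      - (β + 1) ^ m • ((B / β) • qstar a b β) := by
    intro m
    have t0 := (bin m).1
    have t1 := (bin m).2
    have t2 := (bin (m + 1)).1
    have t3 := (bin (m + 1)).2
    rw [show 2 * (m + 1) = 2 * m + 2 by ring] at t2 t3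
    simp only [W, qstar, Finset.sum_range_succ, Finset.sum_range_zero, zero_add, add_zero]
    rw [t0, t1, t2, t3, pow_succ, pow_succ]
    norm_num only [pow_zero, pow_one]
    have k2α : (A / α * (a / (a * b) * α ^ 2)) = a * (A / α * (α + 1)) := by
      rw [eα]; field_simp
    have k2β : (B / β * (a / (a * b) * β ^ 2)) = a * (B / β * (β + 1)) := by
      rw [eβ]; field_simp
    have k3α : (A / α * (1 / (a * b) * α ^ 3)) = A * (α + 1) := by
      rw [pow_succ, eα]; field_simp
    have k3β : (B / β * (1 / (a * b) * β ^ 3)) = B * (β + 1) := by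
      rw [pow_succ, eβ]; field_simp
    have k1α : A / α * α = A := by field_simp
    have k1β : B / β * β = B := by field_simp
    simp only [smul_add, smul_smul, div_one, mul_one, one_mul, mul_assoc] at *
    simp only [k2α, k2β, k3α, k3β, k1α, k1β]
    module
  have hW1 : ∀ m, W a b w0 w1 (2 * m + 1) = (α + 1) ^ m • (A • qstarstar a b α)
      - (β + 1) ^ m • (B • qstarstar a b β) := by
    intro m
    have t0 := (bin m).2
    have t1 := (bin (m + 1)).1
    have t2 := (bin (m + 1)).2
    have t3 := (bin (m + 1 + 1)).1
    rw [show 2 * (m + 1) = 2 * m + 1 + 1 by ring] at t1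
    rw [show 2 * (m + 1) + 1 = 2 * m + 1 + 2 by ring] at t2
    rw [show 2 * (m + 1 + 1) = 2 * m + 1 + 3 by ring] at t3
    simp only [W, qstarstar, Finset.sum_range_succ, Finset.sum_range_zero, zero_add, add_zero]
    rw [t0, t1, t2, t3, pow_succ (α + 1) (m + 1), pow_succ (β + 1) (m + 1), pow_succ, pow_succ]
    norm_num only [pow_zero, pow_one]
    have k1α : (A / α * (α + 1)) = A * (1 / (a * b) * α) := by
      rw [fα]; field_simp
    have k1β : (B / β * (β + 1)) = B * (1 / (a * b) * β) := by
      rw [fβ]; field_simp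
    have c1 : a * (A / α * ((α + 1) ^ m * (α + 1)) - B / β * ((β + 1) ^ m * (β + 1)))
      = (α + 1) ^ m * (A * (a / (a * b) * α)) - (β + 1) ^ m * (B * (a / (a * b) * β)) := by
      linear_combination a * (α + 1) ^ m * k1α - a * (β + 1) ^ m * k1β
    have c2 : A * ((α + 1) ^ m * (α + 1)) - B * ((β + 1) ^ m * (β + 1))
      = (α + 1) ^ m * (A * (1 / (a * b) * α ^ 2)) - (β + 1) ^ m * (B * (1 / (a * b) * β ^ 2)) := by
      linear_combination A * (α + 1) ^ m * fα - B * (β + 1) ^ m * fβ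
    have k3α : (A / α * (α + 1) ^ 2) = A * (1 / (a * b) ^ 2 * α ^ 3) := by
      rw [fα]; field_simp
    have k3β : (B / β * (β + 1) ^ 2) = B * (1 / (a * b) ^ 2 * β ^ 3) := by
      rw [fβ]; field_simp
    have c3 : a * (A / α * ((α + 1) ^ m * (α + 1) * (α + 1))
        - B / β * ((β + 1) ^ m * (β + 1) * (β + 1)))
      = (α + 1) ^ m * (A * (a / (a * b) ^ 2 * α ^ 3))
        - (β + 1) ^ m * (B * (a / (a * b) ^ 2 * β ^ 3)) := by
      linear_combination a * (α + 1) ^ m * k3α - a * (β + 1) ^ m * k3β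
    rw [c1, c2, c3]
    simp only [smul_add, smul_smul, div_one, mul_one]
    module
  obtain ⟨s, rfl⟩ := hr
  have PQ : (α + 1) ^ s * (β + 1) ^ s = 1 := by rw [← mul_pow, pq, one_pow]
  have rα : α ^ (s + s) = (a * b) ^ s * (α + 1) ^ s := by
    rw [← two_mul, pow_mul, eα, mul_pow]
  have rβ : β ^ (s + s) = (a * b) ^ s * (β + 1) ^ s := by
    rw [← two_mul, pow_mul, eβ, mul_pow]
  have rαβ : (α * β) ^ (s + s) = (a * b) ^ s * (a * b) ^ s := by
    rw [h2, ← two_mul, pow_mul, neg_sq, ← pow_mul, two_mul, pow_add]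
  have hs : (a * b) ^ s ≠ 0 := pow_ne_zero _ hab
  split_ifs with hn
  · obtain ⟨m, rfl⟩ := hn
    obtain ⟨t, rfl⟩ : ∃ t, m = t + s := ⟨m - s, by omega⟩
    have TU : (α + 1) ^ t * (β + 1) ^ t = 1 := by rw [← mul_pow, pq, one_pow]
    rw [show t + s + (t + s) - (s + s) = 2 * t by omega,
      show t + s + (t + s) + (s + s) = 2 * (t + s * 2) by ring,
      show t + s + (t + s) = 2 * (t + s) by ring, hW0, hW0, hW0,
      pow_add _ t, pow_add _ t, pow_add _ t, pow_add _ t, pow_mul, pow_mul,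
      cat_aux _ _ _ _ _ _ TU PQ, pow_succ, rα, rβ, rαβ]
    simp only [smul_mul_smul_comm, smul_sub, smul_smul]
    congr 2 <;> field_simp
  · obtain ⟨m, rfl⟩ := Nat.not_even_iff_odd.mp hn
    obtain ⟨t, rfl⟩ : ∃ t, m = t + s := ⟨m - s, by omega⟩
    have TU : (α + 1) ^ t * (β + 1) ^ t = 1 := by rw [← mul_pow, pq, one_pow]
    rw [show 2 * (t + s) + 1 - (s + s) = 2 * t + 1 by omega,
      show 2 * (t + s) + 1 + (s + s) = 2 * (t + s * 2) + 1 by ring, hW1, hW1, hW1,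
      pow_add _ t, pow_add _ t, pow_add _ t, pow_add _ t, pow_mul, pow_mul,
      cat_aux _ _ _ _ _ _ TU PQ, rα, rβ, rαβ]
    simp only [smul_mul_smul_comm, smul_sub, smul_smul]
    congr 2 <;> field_simp
end

section
/- For every integer n ≥ 1, the generalized bi-periodic Fibonacci quaternions with even indices satisfy the recurrence W_{2(n+1)} = (ab+2)·W_{2n} − W_{2(n-1)}. -/
theorem w_rec4 (a b w0 w1 : ℝ) (m : ℕ) :
    w a b w0 w1 (m + 4) = (a * b + 2) * w a b w0 w1 (m + 2) - w a b w0 w1 m := by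
  have h4 : w a b w0 w1 (m + 4) = (if Even (m + 4) then a else b) * w a b w0 w1 (m + 3)
    + w a b w0 w1 (m + 2) := by rw [w]
  have h3 : w a b w0 w1 (m + 3) = (if Even (m + 3) then a else b) * w a b w0 w1 (m + 2)
    + w a b w0 w1 (m + 1) := by rw [w]
  have h2 : w a b w0 w1 (m + 2) = (if Even (m + 2) then a else b) * w a b w0 w1 (m + 1)
    + w a b w0 w1 m := by rw [w]
  rcases Nat.even_or_odd m with h | h
  · have e4 : Even (m + 4) := by grind
    have e3 : ¬ Even (m + 3) := by grind
    have e2 : Even (m + 2) := by grind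
    rw [if_pos e4] at h4
    rw [if_neg e3] at h3
    rw [if_pos e2] at h2
    linear_combination h4 + a * h3 - h2
  · have e4 : ¬ Even (m + 4) := by grind
    have e3 : Even (m + 3) := by grind
    have e2 : ¬ Even (m + 2) := by grind
    rw [if_neg e4] at h4
    rw [if_pos e3] at h3
    rw [if_neg e2] at h2
    linear_combination h4 + b * h3 - h2

/-- The even-indexed generalized bi-periodic Fibonacci quaternions satisfy
`W_{2(n+1)} = (ab+2) W_{2n} - W_{2(n-1)}`. -/
theorem stmt7 (a b w0 w1 : ℝ) (ha : a ≠ 0) (hb : b ≠ 0) (n : ℕ) (hn : 1 ≤ n) :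
    W a b w0 w1 (2 * (n + 1)) =
      (a * b + 2) • W a b w0 w1 (2 * n) - W a b w0 w1 (2 * (n - 1)) := by
  obtain ⟨k, rfl⟩ : ∃ k, n = k + 1 := ⟨n - 1, by omega⟩
  simp only [W, Finset.smul_sum, ← Finset.sum_sub_distrib, smul_smul, ← sub_smul]
  refine Finset.sum_congr rfl fun l _ => ?_
  have h := w_rec4 a b w0 w1 (2 * k + l)
  rw [show 2 * (k + 1 + 1) + l = 2 * k + l + 4 by ring,
    show 2 * (k + 1) + l = 2 * k + l + 2 by ring, Nat.add_sub_cancel, h]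
end

section
/- For every integer n ≥ 1, the 2×2 matrix over the real quaternions with rows (W_{2n}, W_{2(n-1)}) and (W_{2(n+1)}, W_{2n}) equals the product of the matrix with rows (W_2, W_0) and (W_4, W_2) with the (n−1)-st power of the matrix with rows (ab+2, 1) and (−1, 0) (the latter entries regarded as real quaternions). -/
theorem w_add_four (a b w0 w1 : ℝ) (n : ℕ) :
    w a b w0 w1 (n + 4) = (a * b + 2) * w a b w0 w1 (n + 2) - w a b w0 w1 n := by
  have h4 : w a b w0 w1 (n + 4) = (if Even (n + 2 + 2) then a else b) * w a b w0 w1 (n + 3) +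
    w a b w0 w1 (n + 2) := by rw [w]
  have h3 : w a b w0 w1 (n + 3) = (if Even (n + 1 + 2) then a else b) * w a b w0 w1 (n + 2) +
    w a b w0 w1 (n + 1) := by rw [w]
  have h2 : w a b w0 w1 (n + 2) = (if Even (n + 2) then a else b) * w a b w0 w1 (n + 1) +
    w a b w0 w1 n := by rw [w]
  by_cases h : Even n
  · simp [h, parity_simps] at h4 h3 h2
    linear_combination h4 + a * h3 - h2
  · simp [h, parity_simps] at h4 h3 h2
    linear_combination h4 + b * h3 - h2

theorem W_add_four (a b w0 w1 : ℝ) (n : ℕ) :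
    W a b w0 w1 (n + 4) =
      W a b w0 w1 (n + 2) * ((a * b + 2 : ℝ) : Quaternion ℝ) - W a b w0 w1 n := by
  have key : ∀ l, w a b w0 w1 (n + 4 + l) =
      (a * b + 2) * w a b w0 w1 (n + 2 + l) - w a b w0 w1 (n + l) := by
    intro l
    have := w_add_four a b w0 w1 (n + l)
    rwa [show n + 4 + l = n + l + 4 by ring, show n + 2 + l = n + l + 2 by ring]
  rw [Quaternion.mul_coe_eq_smul]
  simp only [W, key, Finset.smul_sum, ← Finset.sum_sub_distrib, sub_smul, mul_smul]

/-- Matrix representation of the even-indexed generalized bi-periodic Fibonacci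
quaternions. The entries `ab+2`, `1`, `-1`, `0` are regarded as real quaternions. -/
theorem stmt8 (a b w0 w1 : ℝ) (ha : a ≠ 0) (hb : b ≠ 0) (n : ℕ) (hn : 1 ≤ n) :
    (!![W a b w0 w1 (2 * n), W a b w0 w1 (2 * (n - 1));
        W a b w0 w1 (2 * (n + 1)), W a b w0 w1 (2 * n)] :
          Matrix (Fin 2) (Fin 2) (Quaternion ℝ)) =
      !![W a b w0 w1 2, W a b w0 w1 0; W a b w0 w1 4, W a b w0 w1 2] *
        (!![((a * b + 2 : ℝ) : Quaternion ℝ), 1; -1, 0]) ^ (n - 1) := by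
  obtain ⟨m, rfl⟩ : ∃ m, n = m + 1 := ⟨n - 1, by omega⟩
  clear hn
  simp only [Nat.add_sub_cancel]
  induction m with
  | zero => simp
  | succ m ih =>
    rw [pow_succ, ← mul_assoc, ← ih]
    have h1 := W_add_four a b w0 w1 (2 * m)
    have h2 := W_add_four a b w0 w1 (2 * m + 2)
    rw [show 2 * (m + 1 + 1 + 1) = 2 * m + 2 + 4 by ring,
      show 2 * (m + 1 + 1) = 2 * m + 4 by ring, show 2 * (m + 1) = 2 * m + 2 by ring, h2,
      show 2 * m + 2 + 2 = 2 * m + 4 by ring, Matrix.mul_fin_two]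
    simp only [mul_one, mul_zero, add_zero, mul_neg, ← sub_eq_add_neg, ← h1]
end

section
/- For every natural number n, W_{2(n+1)}·Q_{2n} − W_{2n}·Q_{2(n+1)} = (1/(ab))·(A·α*·β*·β − B·β*·α*·α). -/
/-- The bi-periodic Fibonacci quaternion `Q_n`, i.e. `W_n` with `w_0 = 0`, `w_1 = 1`. -/
noncomputable def Q (a b : ℝ) (n : ℕ) : Quaternion ℝ :=
  W a b 0 1 n

theorem w_aux (a b w0 w1 x y P R : ℝ)
    (hx : x ^ 2 = a * b * (x + 1)) (hy : y ^ 2 = a * b * (y + 1))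
    (h0 : w0 = a * (P - R)) (h1 : w1 = P * x - R * y) (m : ℕ) :
    w a b w0 w1 (2 * m) = a * (P * (x + 1) ^ m - R * (y + 1) ^ m) ∧
    w a b w0 w1 (2 * m + 1) = P * x * (x + 1) ^ m - R * y * (y + 1) ^ m := by
  induction m with
  | zero => simp [w, h0, h1]
  | succ k ih =>
    obtain ⟨i0, i1⟩ := ih
    have e0 : w a b w0 w1 (2 * (k + 1)) = a * (P * (x + 1) ^ (k+1) - R * (y + 1) ^ (k+1)) := by
      have : Even (2 * k + 2) := ⟨k + 1, by ring⟩
      rw [show 2 * (k + 1) = 2 * k + 2 by ring, w, if_pos this, i0, i1]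
      ring
    refine ⟨e0, ?_⟩
    have : ¬ Even (2 * k + 1 + 2) := by
      rw [Nat.not_even_iff_odd]; exact ⟨k + 1, by ring⟩
    rw [show 2 * (k + 1) + 1 = 2 * k + 1 + 2 by ring, w, if_neg this, i1,
      show 2 * k + 1 + 1 = 2 * (k + 1) by ring, e0]
    linear_combination (-P * (x+1)^k) * hx + (R * (y+1)^k) * hy

theorem W_aux (a b w0 w1 x y P R : ℝ) (ha : a ≠ 0) (hb : b ≠ 0)
    (hx : x ^ 2 = a * b * (x + 1)) (hy : y ^ 2 = a * b * (y + 1))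
    (h0 : w0 = a * (P - R)) (h1 : w1 = P * x - R * y) (m : ℕ) :
    W a b w0 w1 (2 * m) =
      (P * (x + 1) ^ m) • qstar a b x - (R * (y + 1) ^ m) • qstar a b y := by
  have key : ∀ z : ℝ, z ^ 2 = a * b * (z + 1) → qstar a b z =
      a • e 0 + z • e 1 + (a * (z + 1)) • e 2 + (z * (z + 1)) • e 3 := by
    intro z hz
    have hab : a * b ≠ 0 := mul_ne_zero ha hb
    have h2 : a / (a * b) * z ^ 2 = a * (z + 1) := by
      rw [hz]; field_simp
    have h3 : 1 / (a * b) * z ^ 3 = z * (z + 1) := by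
      rw [pow_succ, hz]; field_simp
    simp only [qstar, Finset.sum_range_succ, Finset.sum_range_zero, zero_add]
    norm_num
    norm_num at h2 h3
    rw [h2, h3]
  obtain ⟨a0, a1⟩ := w_aux a b w0 w1 x y P R hx hy h0 h1 m
  obtain ⟨a2, a3⟩ := w_aux a b w0 w1 x y P R hx hy h0 h1 (m + 1)
  rw [key x hx, key y hy]
  simp only [W, Finset.sum_range_succ, Finset.sum_range_zero, zero_add, add_zero]
  rw [show 2 * m + 2 = 2 * (m + 1) by ring, show 2 * m + 3 = 2 * (m + 1) + 1 by ring,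
    a0, a1, a2, a3]
  module

/-- Relation between the generalized bi-periodic Fibonacci quaternions and the
bi-periodic Fibonacci quaternions. -/
theorem stmt11 (a b w0 w1 α β A B : ℝ)
    (ha : a ≠ 0) (hb : b ≠ 0) (hD : a ^ 2 * b ^ 2 + 4 * (a * b) > 0)
    (hα : α = (a * b + Real.sqrt (a ^ 2 * b ^ 2 + 4 * (a * b))) / 2)
    (hβ : β = (a * b - Real.sqrt (a ^ 2 * b ^ 2 + 4 * (a * b))) / 2)
    (hA : A = (α * w1 + b * w0) / (α - β))
    (hB : B = (β * w1 + b * w0) / (α - β))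
    (n : ℕ) :
    W a b w0 w1 (2 * (n + 1)) * Q a b (2 * n) -
        W a b w0 w1 (2 * n) * Q a b (2 * (n + 1)) =
      (a * b)⁻¹ •
        ((A * β) • (qstar a b α * qstar a b β) - (B * α) • (qstar a b β * qstar a b α)) := by
  have hs := Real.sq_sqrt hD.le
  have hs0 := Real.sqrt_pos.mpr hD
  set s := Real.sqrt (a ^ 2 * b ^ 2 + 4 * (a * b)) with hsdef
  have hab : a * b ≠ 0 := mul_ne_zero ha hb
  have hsum : α + β = a * b := by rw [hα, hβ]; ring
  have hprod : α * β = -(a * b) := by rw [hα, hβ]; linear_combination (-1/4) * hs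
  have hd : α - β ≠ 0 := by
    have : α - β = s := by rw [hα, hβ]; ring
    rw [this]; exact hs0.ne'
  have hx : α ^ 2 = a * b * (α + 1) := by linear_combination α * hsum - hprod
  have hy : β ^ 2 = a * b * (β + 1) := by linear_combination β * hsum - hprod
  have hA' : A * (α - β) = α * w1 + b * w0 := by rw [hA]; field_simp
  have hB' : B * (α - β) = β * w1 + b * w0 := by rw [hB]; field_simp
  clear_value s
  clear hA hB hα hβ hsdef
  have hcd : (α + 1) ^ n * (β + 1) ^ n = 1 := by
    rw [← mul_pow, show (α + 1) * (β + 1) = 1 by linear_combination hprod + hsum, one_pow]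
  have hW := W_aux a b w0 w1 α β (-(A * β) / (a * b)) (-(B * α) / (a * b)) ha hb hx hy
    (by
      have h : b * w0 = B * α - A * β := by
        apply mul_right_cancel₀ hd
        linear_combination β * hA' - α * hB'
      field_simp
      linear_combination h)
    (by
      have h : w1 = A - B := by
        apply mul_right_cancel₀ hd
        linear_combination hB' - hA'
      field_simp
      linear_combination (a * b) * h + (A - B) * hprod)
  have hQ := W_aux a b 0 1 α β (1 / (α - β)) (1 / (α - β)) ha hb hx hy
    (by ring) (by field_simp)
  simp only [Q]
  rw [hW, hW, hQ, hQ]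
  generalize qstar a b α = X
  generalize qstar a b β = Y
  simp only [sub_mul, mul_sub, smul_mul_smul_comm, pow_succ]
  generalize (α + 1) ^ n = c at *
  generalize (β + 1) ^ n = d at *
  match_scalars
  all_goals field_simp
  all_goals ring_nf
  · linear_combination (B * α * β - B * α ^ 2) * hcd
  · linear_combination (A * β * α - A * β ^ 2) * hcd
end

section
/- For every natural number n, the norm of the generalized bi-periodic Fibonacci quaternion satisfies Nr(W_n) = w_n² + w_{n+1}² + w_{n+2}² + w_{n+3}² = T(n) + T(n+1), where T(n) = (a^{2ζ(n+1)} / ((ab)^{n−ζ(n)}·(αβ)²·(α−β)²))·(w_1²·X + 2·w_0·w_1·b·Y + w_0²·b²·Z), with X = α^{2n}(α⁴ + (αβ)²) + β^{2n}(β⁴ + (αβ)²) − 4(αβ)^{n+2}, Y = α^{2n-1}(α⁴ + (αβ)²) + β^{2n-1}(β⁴ + (αβ)²) + 2(αβ)^{n+2}, and Z = α^{2n-2}(α⁴ + (αβ)²) + β^{2n-2}(β⁴ + (αβ)²) − 4(αβ)^{n+1}. -/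
/-- The quantity `T(n)` in the norm formula for the generalized bi-periodic
Fibonacci quaternions. Here `ζ(n) = n % 2` is the parity function and the powers
`α^{2n}, α^{2n-1}, α^{2n-2}` (and similarly for `β`) are integer powers. -/
noncomputable def T (a b w0 w1 α β : ℝ) (n : ℕ) : ℝ :=
  a ^ (2 * ((n + 1) % 2)) /
      ((a * b) ^ (n - n % 2) * (α * β) ^ 2 * (α - β) ^ 2) *
    (w1 ^ 2 *
        (α ^ (2 * (n : ℤ)) * (α ^ 4 + (α * β) ^ 2) +
          β ^ (2 * (n : ℤ)) * (β ^ 4 + (α * β) ^ 2) - 4 * (α * β) ^ (n + 2)) +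
      2 * w0 * w1 * b *
        (α ^ (2 * (n : ℤ) - 1) * (α ^ 4 + (α * β) ^ 2) +
          β ^ (2 * (n : ℤ) - 1) * (β ^ 4 + (α * β) ^ 2) + 2 * (α * β) ^ (n + 2)) +
      w0 ^ 2 * b ^ 2 *
        (α ^ (2 * (n : ℤ) - 2) * (α ^ 4 + (α * β) ^ 2) +
          β ^ (2 * (n : ℤ) - 2) * (β ^ 4 + (α * β) ^ 2) - 4 * (α * β) ^ (n + 1)))

noncomputable def auxC (a b : ℝ) (n : ℕ) : ℝ := a ^ ((n + 1) % 2) / (a * b) ^ (n / 2)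

noncomputable def auxU (b w0 w1 α β : ℝ) (n : ℕ) : ℝ :=
  α ^ ((n : ℤ) - 1) * (w1 * α + b * w0) - β ^ ((n : ℤ) - 1) * (w1 * β + b * w0)

lemma auxC_two (a b : ℝ) (n : ℕ) : auxC a b (n + 2) = auxC a b n / (a * b) := by
  unfold auxC
  have h1 : (n + 2 + 1) % 2 = (n + 1) % 2 := by omega
  have h2 : (n + 2) / 2 = n / 2 + 1 := by omega
  rw [h1, h2, pow_succ, div_div]

lemma auxC_one (a b : ℝ) (ha : a ≠ 0) (hb : b ≠ 0) (n : ℕ) :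
    (if Even (n + 2) then a else b) * auxC a b (n + 1) = auxC a b n := by
  unfold auxC
  rcases Nat.even_or_odd' n with ⟨m, rfl | rfl⟩
  · have h0 : Even (2 * m + 2) := ⟨m + 1, by ring⟩
    have h1 : (2 * m + 1 + 1) % 2 = 0 := by omega
    have h2 : (2 * m + 1) / 2 = m := by omega
    have h3 : (2 * m + 1) % 2 = 1 := by omega
    have h4 : (2 * m) / 2 = m := by omega
    rw [if_pos h0, h1, h2, h3, h4]
    ring
  · have h0 : ¬ Even (2 * m + 1 + 2) := by
      rw [Nat.not_even_iff_odd]; exact ⟨m + 1, by ring⟩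
    have h1 : (2 * m + 1 + 1 + 1) % 2 = 1 := by omega
    have h2 : (2 * m + 1 + 1) / 2 = m + 1 := by omega
    have h3 : (2 * m + 1 + 1) % 2 = 0 := by omega
    have h4 : (2 * m + 1) / 2 = m := by omega
    rw [if_neg h0, h1, h2, h3, h4, pow_succ (a * b) m]
    field_simp

lemma auxC_sq (a b : ℝ) (n : ℕ) :
    auxC a b n ^ 2 = a ^ (2 * ((n + 1) % 2)) / (a * b) ^ (n - n % 2) := by
  unfold auxC
  have h : n - n % 2 = n / 2 * 2 := by omega
  rw [div_pow, h, pow_mul (a * b), mul_comm 2, pow_mul]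

lemma binet (a b w0 w1 α β : ℝ) (ha : a ≠ 0) (hb : b ≠ 0)
    (hs : α + β = a * b) (hp : α * β = -(a * b)) (hd : α - β ≠ 0)
    (hα0 : α ≠ 0) (hβ0 : β ≠ 0) (n : ℕ) :
    w a b w0 w1 n = auxC a b n * auxU b w0 w1 α β n / (α - β) := by
  have hα2 : α ^ 2 = a * b * (α + 1) := by linear_combination α * hs - hp
  have hβ2 : β ^ 2 = a * b * (β + 1) := by linear_combination β * hs - hp
  induction n using Nat.twoStepInduction with
  | zero =>
    simp only [w, auxC, auxU]
    norm_num
    field_simp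
    linear_combination (w0 * (α - β)) * hp
  | one =>
    simp only [w, auxC, auxU]
    norm_num
    field_simp
  | more n ih0 ih1 =>
    rw [w, ih0, ih1, auxC_two]
    have hc := auxC_one a b ha hb n
    have e1 : ((n + 1 : ℕ) : ℤ) - 1 = ((n : ℤ) - 1) + 1 := by push_cast; ring
    have e2 : ((n + 2 : ℕ) : ℤ) - 1 = ((n : ℤ) - 1) + 1 + 1 := by push_cast; ring
    have hU : auxU b w0 w1 α β (n + 2) =
        a * b * (auxU b w0 w1 α β (n + 1) + auxU b w0 w1 α β n) := by
      unfold auxU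
      rw [e1, e2, zpow_add_one₀ hα0, zpow_add_one₀ hα0, zpow_add_one₀ hβ0, zpow_add_one₀ hβ0]
      linear_combination α ^ ((n : ℤ) - 1) * (w1 * α + b * w0) * hα2
        - β ^ ((n : ℤ) - 1) * (w1 * β + b * w0) * hβ2
    have e3 : (if Even (n + 2) then a else b) *
        (auxC a b (n + 1) * auxU b w0 w1 α β (n + 1) / (α - β)) =
        auxC a b n * auxU b w0 w1 α β (n + 1) / (α - β) := by
      rw [← hc]; ring
    rw [e3, hU]
    field_simp

lemma normSq_W (a b w0 w1 : ℝ) (n : ℕ) :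
    Quaternion.normSq (W a b w0 w1 n) = w a b w0 w1 n ^ 2 + w a b w0 w1 (n + 1) ^ 2 +
        w a b w0 w1 (n + 2) ^ 2 + w a b w0 w1 (n + 3) ^ 2 := by
  unfold W
  generalize w a b w0 w1 = f
  rw [Finset.sum_range_succ, Finset.sum_range_succ, Finset.sum_range_succ, Finset.sum_range_one]
  have h00 : (e 0).re = 1 := rfl
  have h01 : (e 0).imI = 0 := rfl
  have h02 : (e 0).imJ = 0 := rfl
  have h03 : (e 0).imK = 0 := rfl
  have h10 : (e 1).re = 0 := rfl
  have h11 : (e 1).imI = 1 := rfl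
  have h12 : (e 1).imJ = 0 := rfl
  have h13 : (e 1).imK = 0 := rfl
  have h20 : (e 2).re = 0 := rfl
  have h21 : (e 2).imI = 0 := rfl
  have h22 : (e 2).imJ = 1 := rfl
  have h23 : (e 2).imK = 0 := rfl
  have h30 : (e 3).re = 0 := rfl
  have h31 : (e 3).imI = 0 := rfl
  have h32 : (e 3).imJ = 0 := rfl
  have h33 : (e 3).imK = 1 := rfl
  rw [Quaternion.normSq_def']
  simp [h00, h01, h02, h03, h10, h11, h12, h13, h20, h21, h22, h23, h30, h31, h32, h33]

lemma T_eq (a b w0 w1 α β : ℝ) (ha : a ≠ 0) (hb : b ≠ 0)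
    (hs : α + β = a * b) (hp : α * β = -(a * b)) (hd : α - β ≠ 0)
    (hα0 : α ≠ 0) (hβ0 : β ≠ 0) (n : ℕ) :
    T a b w0 w1 α β n = w a b w0 w1 n ^ 2 + w a b w0 w1 (n + 2) ^ 2 := by
  rw [binet a b w0 w1 α β ha hb hs hp hd hα0 hβ0 n,
    binet a b w0 w1 α β ha hb hs hp hd hα0 hβ0 (n + 2), auxC_two]
  have hab : a * b = -(α * β) := by linarith
  have e2 : ((n + 2 : ℕ) : ℤ) - 1 = ((n : ℤ) - 1) + 1 + 1 := by push_cast; ring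
  have z0 : ∀ x : ℝ, x ≠ 0 → x ^ (2 * (n : ℤ) - 2) = (x ^ ((n : ℤ) - 1)) ^ 2 := by
    intro x hx
    rw [← zpow_natCast, ← zpow_mul]; congr 1; push_cast; ring
  have z1 : ∀ x : ℝ, x ≠ 0 → x ^ (2 * (n : ℤ) - 1) = (x ^ ((n : ℤ) - 1)) ^ 2 * x := by
    intro x hx
    rw [← z0 x hx, ← zpow_add_one₀ hx]; congr 1; ring
  have z2 : ∀ x : ℝ, x ≠ 0 → x ^ (2 * (n : ℤ)) = (x ^ ((n : ℤ) - 1)) ^ 2 * x * x := by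
    intro x hx
    rw [← z1 x hx, ← zpow_add_one₀ hx]; congr 1; ring
  have z3 : ∀ x : ℝ, x ≠ 0 → x ^ n = x ^ ((n : ℤ) - 1) * x := by
    intro x hx
    rw [← zpow_add_one₀ hx, ← zpow_natCast]; congr 1; ring
  have hq : T a b w0 w1 α β n = auxC a b n ^ 2 / ((α * β) ^ 2 * (α - β) ^ 2) *
      (auxU b w0 w1 α β n ^ 2 * (α * β) ^ 2 + auxU b w0 w1 α β (n + 2) ^ 2) := by
    rw [auxC_sq, div_div, ← mul_assoc]
    unfold T auxU
    congr 1
    rw [e2, zpow_add_one₀ hα0, zpow_add_one₀ hα0, zpow_add_one₀ hβ0, zpow_add_one₀ hβ0,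
      z0 α hα0, z0 β hβ0, z1 α hα0, z1 β hβ0, z2 α hα0, z2 β hβ0,
      pow_add (α * β) n, pow_add (α * β) n, mul_pow α β n, z3 α hα0, z3 β hβ0]
    have hsp : α + β = -(α * β) := by linarith
    generalize α ^ ((n : ℤ) - 1) = u
    generalize β ^ ((n : ℤ) - 1) = v
    linear_combination (4 * w0 * w1 * b * u * v * (α * β) ^ 2) * hsp
  rw [hq, hab]
  field_simp

/-- The norm `Nr(W_n) = W_n · conj(W_n)` of the generalized bi-periodic Fibonacci
quaternion equals `w_n² + w_{n+1}² + w_{n+2}² + w_{n+3}²`, which equals `T(n) + T(n+1)`. -/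
theorem stmt12 (a b w0 w1 α β : ℝ)
    (ha : a ≠ 0) (hb : b ≠ 0) (hD : a ^ 2 * b ^ 2 + 4 * (a * b) > 0)
    (hα : α = (a * b + Real.sqrt (a ^ 2 * b ^ 2 + 4 * (a * b))) / 2)
    (hβ : β = (a * b - Real.sqrt (a ^ 2 * b ^ 2 + 4 * (a * b))) / 2)
    (n : ℕ) :
    W a b w0 w1 n * star (W a b w0 w1 n) =
        ((w a b w0 w1 n ^ 2 + w a b w0 w1 (n + 1) ^ 2 + w a b w0 w1 (n + 2) ^ 2 +
            w a b w0 w1 (n + 3) ^ 2 : ℝ) : Quaternion ℝ) ∧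
      w a b w0 w1 n ^ 2 + w a b w0 w1 (n + 1) ^ 2 + w a b w0 w1 (n + 2) ^ 2 +
          w a b w0 w1 (n + 3) ^ 2 =
        T a b w0 w1 α β n + T a b w0 w1 α β (n + 1) := by
  have hsq := Real.sq_sqrt hD.le
  have hs : α + β = a * b := by rw [hα, hβ]; ring
  have hp : α * β = -(a * b) := by
    rw [hα, hβ]; linear_combination (-1 / 4) * hsq
  have hd : α - β ≠ 0 := by
    have h : α - β = Real.sqrt (a ^ 2 * b ^ 2 + 4 * (a * b)) := by rw [hα, hβ]; ring
    rw [h]; exact (Real.sqrt_pos.mpr hD).ne'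
  have h0 : α * β ≠ 0 := by rw [hp]; exact neg_ne_zero.mpr (mul_ne_zero ha hb)
  have hα0 := left_ne_zero_of_mul h0
  have hβ0 := right_ne_zero_of_mul h0
  constructor
  · rw [Quaternion.self_mul_star]
    have h : Quaternion.normSq (W a b w0 w1 n) = w a b w0 w1 n ^ 2 + w a b w0 w1 (n + 1) ^ 2 +
        w a b w0 w1 (n + 2) ^ 2 + w a b w0 w1 (n + 3) ^ 2 := normSq_W a b w0 w1 n
    rw [h]
  · rw [T_eq a b w0 w1 α β ha hb hs hp hd hα0 hβ0 n,
      T_eq a b w0 w1 α β ha hb hs hp hd hα0 hβ0 (n + 1)]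
    ring
end

section
/- For every integer n ≥ 1, Σ_{r=0}^{n-1} W_{2r} = (W_{2n} − W_{2n-2})/(ab) − (A·α*·β² − B·β*·α²)/(ab)². -/
theorem w_even_step (a b w0 w1 : ℝ) (n : ℕ) :
    w a b w0 w1 (2 * n + 2) = a * w a b w0 w1 (2 * n + 1) + w a b w0 w1 (2 * n) := by
  have h : Even (2 * n + 2) := ⟨n + 1, by ring⟩
  rw [w, if_pos h]

theorem w_odd_step (a b w0 w1 : ℝ) (n : ℕ) :
    w a b w0 w1 (2 * n + 3) = b * w a b w0 w1 (2 * n + 2) + w a b w0 w1 (2 * n + 1) := by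
  have h : ¬ Even (2 * n + 1 + 2) := by
    rw [Nat.not_even_iff_odd]; exact ⟨n + 1, by ring⟩
  rw [show 2 * n + 3 = 2 * n + 1 + 2 from rfl, w, if_neg h]

theorem W_eq (a b w0 w1 : ℝ) (n : ℕ) :
    W a b w0 w1 n = w a b w0 w1 n • e 0 + w a b w0 w1 (n + 1) • e 1 + w a b w0 w1 (n + 2) • e 2
      + w a b w0 w1 (n + 3) • e 3 := by
  simp only [W, Finset.sum_range_succ, Finset.sum_range_zero, zero_add, add_zero]

theorem qstar_eq (a b x : ℝ) :
    qstar a b x = a • e 0 + x • e 1 + (a / (a * b) * x ^ 2) • e 2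
      + (1 / (a * b) * x ^ 3) • e 3 := by
  simp [qstar, Finset.sum_range_succ]

/-- Summation formula for the even-indexed generalized bi-periodic Fibonacci quaternions. -/
theorem stmt14 (a b w0 w1 α β A B : ℝ)
    (ha : a ≠ 0) (hb : b ≠ 0) (hD : a ^ 2 * b ^ 2 + 4 * (a * b) > 0)
    (hα : α = (a * b + Real.sqrt (a ^ 2 * b ^ 2 + 4 * (a * b))) / 2)
    (hβ : β = (a * b - Real.sqrt (a ^ 2 * b ^ 2 + 4 * (a * b))) / 2)
    (hA : A = (α * w1 + b * w0) / (α - β))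
    (hB : B = (β * w1 + b * w0) / (α - β))
    (n : ℕ) (hn : 1 ≤ n) :
    ∑ r ∈ Finset.range n, W a b w0 w1 (2 * r) =
      (a * b)⁻¹ • (W a b w0 w1 (2 * n) - W a b w0 w1 (2 * n - 2)) -
        ((a * b) ^ 2)⁻¹ • ((A * β ^ 2) • qstar a b α - (B * α ^ 2) • qstar a b β) := by
  have hs := Real.sq_sqrt hD.le
  have hp := Real.sqrt_pos.mpr hD
  have hab : α + β = a * b := by rw [hα, hβ]; ring
  have hm : α * β = -(a * b) := by rw [hα, hβ]; linear_combination (-1 / 4) * hs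
  have hd : α - β ≠ 0 := by
    have : α - β = Real.sqrt (a ^ 2 * b ^ 2 + 4 * (a * b)) := by rw [hα, hβ]; ring
    rw [this]; exact hp.ne'
  have hA' : A * (α - β) = α * w1 + b * w0 := by rw [hA]; field_simp
  have hB' : B * (α - β) = β * w1 + b * w0 := by rw [hB]; field_simp
  have h1 : A - B = w1 := by
    apply mul_right_cancel₀ hd; linear_combination hA' - hB'
  have h2 : A * β - B * α = - (b * w0) := by
    apply mul_right_cancel₀ hd; linear_combination β * hA' - α * hB'
  have h3 : A * β ^ 2 - B * α ^ 2 = a * b * w1 - a * b * (b * w0) := by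
    linear_combination (α + β) * h2 - α * β * h1 - b * w0 * hab - w1 * hm
  have h4 : A * α - B * β = a * b * w1 + b * w0 := by
    linear_combination (α + β) * h1 - h2 + w1 * hab
  clear hα hβ hA hB hA' hB' hs hp hD hd
  obtain ⟨m, rfl⟩ : ∃ m, n = m + 1 := ⟨n - 1, by omega⟩
  clear hn
  rw [show 2 * (m + 1) - 2 = 2 * m by omega]
  induction m with
  | zero =>
    have e2 := w_even_step a b w0 w1 0
    have e3 := w_odd_step a b w0 w1 0
    have e4 := w_even_step a b w0 w1 1
    have e5 := w_odd_step a b w0 w1 1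
    have e0 : w a b w0 w1 0 = w0 := by rw [w]
    have e1 : w a b w0 w1 1 = w1 := by rw [w]
    norm_num at e2 e3 e4 e5
    have g1 : A * β ^ 2 * α - B * α ^ 2 * β = a * b * (b * w0) := by
      linear_combination α * β * h2 - b * w0 * hm
    have g2 : A * β ^ 2 * α ^ 2 - B * α ^ 2 * β ^ 2 = (a * b) ^ 2 * w1 := by
      linear_combination (α * β) ^ 2 * h1 + w1 * (α * β - a * b) * hm
    have g3 : A * β ^ 2 * α ^ 3 - B * α ^ 2 * β ^ 3 = (a * b) ^ 2 * (a * b * w1 + b * w0) := by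
      linear_combination (α * β) ^ 2 * h4 + (a * b * w1 + b * w0) * (α * β - a * b) * hm
    simp only [W_eq, qstar_eq, zero_add, Finset.sum_range_one, mul_zero, mul_one, Nat.reduceAdd,
      e5, e4, e3, e2, e1, e0]
    match_scalars
    · field_simp
      linear_combination h3
    · field_simp
      linear_combination g1
    · field_simp
      linear_combination g2
    · field_simp
      linear_combination g3
  | succ k ih =>
    rw [Finset.sum_range_succ, ih]
    have e2 := w_even_step a b w0 w1 k
    have e3 := w_odd_step a b w0 w1 k
    have e4 := w_even_step a b w0 w1 (k + 1)
    have e5 := w_odd_step a b w0 w1 (k + 1)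
    have e6 := w_even_step a b w0 w1 (k + 2)
    have e7 := w_odd_step a b w0 w1 (k + 2)
    simp only [mul_add, add_assoc] at e2 e3 e4 e5 e6 e7
    norm_num at e2 e3 e4 e5 e6 e7
    have key : W a b w0 w1 (2 * (k + 1)) = (a * b)⁻¹ • (W a b w0 w1 (2 * (k + 1 + 1)) -
        W a b w0 w1 (2 * (k + 1)) - (W a b w0 w1 (2 * (k + 1)) - W a b w0 w1 (2 * k))) := by
      simp only [W_eq, mul_add, add_assoc]
      simp only [Nat.reduceAdd, Nat.reduceMul, e7, e6, e5, e4, e3, e2]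
      match_scalars <;> field_simp <;> ring
    rw [← sub_eq_zero] at key ⊢
    rw [← key]
    module
end
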